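/- Let f > 1 be an odd integer such that Ω(2^f − 1) ≤ 2. Then f is either a prime or the square of a prime. -/

import Mathlib

/-- `Ω n`: the number of prime divisors of `n` counted with multiplicity. -/
def bigOmega (n : ℕ) : ℕ := n.primeFactorsList.length

lemma bigOmega_lt {a b : ℕ} (hd : a ∣ b) (hlt : a < b) : bigOmega a < bigOmega b := by
  obtain ⟨c, rfl⟩ := hd
  have ha : a ≠ 0 := by rintro rfl; simp at hlt
  have hc : 1 < c := by
    by_contra hc
    have : c ≤ 1 := by omega
    nlinarith
  have h1 := ArithmeticFunction.cardFactors_mul ha (by omega : c ≠ 0)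
  have h2 := ArithmeticFunction.cardFactors_pos_iff_one_lt.2 hc
  simp only [ArithmeticFunction.cardFactors_apply] at h1 h2
  unfold bigOmega
  omega

lemma mers_lt {a b : ℕ} (hlt : a < b) : 2 ^ a - 1 < 2 ^ b - 1 := by
  have h1 : 2 ^ a < 2 ^ b := Nat.pow_lt_pow_right (by norm_num) hlt
  have h2 : 0 < 2 ^ a := by positivity
  omega

lemma bigOmega_mers_lt {a b : ℕ} (hd : a ∣ b) (hlt : a < b) :
    bigOmega (2 ^ a - 1) < bigOmega (2 ^ b - 1) :=
  bigOmega_lt (Nat.pow_sub_one_dvd_pow_sub_one 2 hd) (mers_lt hlt)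

/-- If `f > 1` is odd and `2^f - 1` has at most two prime divisors counted with multiplicity,
then `f` is a prime or the square of a prime. -/
theorem mersenne_two_prime_divisors (f : ℕ) (hf : 1 < f) (hodd : Odd f)
    (h : bigOmega (2 ^ f - 1) ≤ 2) :
    f.Prime ∨ ∃ p : ℕ, p.Prime ∧ f = p ^ 2 := by
  by_cases hfp : f.Prime
  · exact Or.inl hfp
  right
  have h1 : ∀ a, 1 < a → 0 < bigOmega (2 ^ a - 1) := fun a ha =>
    lt_of_le_of_lt (Nat.zero_le _) (bigOmega_mers_lt (one_dvd a) ha)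
  have key : ∀ m, m ∣ f → 1 < m → m < f → m.Prime := by
    intro m hm hm1 hmf
    by_contra hmp
    have hq := Nat.minFac_prime (n := m) (by omega)
    have h2 := bigOmega_mers_lt (Nat.minFac_dvd m)
      ((Nat.not_prime_iff_minFac_lt (by omega)).1 hmp)
    have h3 := bigOmega_mers_lt hm hmf
    have := h1 _ hq.one_lt
    omega
  have hp := Nat.minFac_prime (n := f) (by omega)
  have hlt := (Nat.not_prime_iff_minFac_lt (by omega)).1 hfp
  obtain ⟨q, hq⟩ := Nat.minFac_dvd f
  generalize f.minFac = p at *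
  have hp2 := hp.two_le
  have hq1 : 1 < q := by
    by_contra hc
    have : q ≤ 1 := by omega
    nlinarith
  have hqp : q.Prime := key q (hq ▸ dvd_mul_left q p) hq1 (by nlinarith)
  refine ⟨p, hp, ?_⟩
  by_cases hpq : p = q
  · rw [hq, ← hpq, sq]
  exfalso
  have hcop : Nat.Coprime (2 ^ p - 1) (2 ^ q - 1) := by
    unfold Nat.Coprime
    rw [Nat.pow_sub_one_gcd_pow_sub_one, (Nat.coprime_primes hp hqp).2 hpq]
    norm_num
  have hdvd := hcop.mul_dvd_of_dvd_of_dvd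
    (Nat.pow_sub_one_dvd_pow_sub_one 2 (show p ∣ f from hq ▸ dvd_mul_right p q))
    (Nat.pow_sub_one_dvd_pow_sub_one 2 (show q ∣ f from hq ▸ dvd_mul_left q p))
  have hle : 2 ^ (p + q) ≤ 2 ^ f := Nat.pow_le_pow_right (by norm_num) (by nlinarith)
  have hP : 2 ^ 2 ≤ 2 ^ p := Nat.pow_le_pow_right (by norm_num) hp2
  have hQ : 2 ^ 2 ≤ 2 ^ q := Nat.pow_le_pow_right (by norm_num) hq1
  rw [pow_add] at hle
  have hlt2 : (2 ^ p - 1) * (2 ^ q - 1) < 2 ^ f - 1 := by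
    obtain ⟨A, hA⟩ : ∃ A, 2 ^ p = A + 1 := ⟨2 ^ p - 1, by omega⟩
    obtain ⟨B, hB⟩ : ∃ B, 2 ^ q = B + 1 := ⟨2 ^ q - 1, by omega⟩
    rw [hA, hB] at hle ⊢
    rw [hA] at hP
    rw [hB] at hQ
    simp only [Nat.add_sub_cancel]
    apply Nat.lt_sub_of_add_lt
    nlinarith
  have h5 := bigOmega_lt hdvd hlt2
  have h6 := ArithmeticFunction.cardFactors_mul (by omega : 2 ^ p - 1 ≠ 0) (by omega : 2 ^ q - 1 ≠ 0)
  have h7 := h1 p (by omega)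
  have h8 := h1 q hq1
  simp only [ArithmeticFunction.cardFactors_apply] at h6
  unfold bigOmega at *
  omega
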